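/- Let N be a positive integer, D a positive integer that is not a perfect square, and k a positive integer. Then for every rational number x: ∑_{(a,b,c) ∈ ℤ³, b²−4ac=D, N∣a, a<0, a(x+1)²+b(x+1)+c>0} (a(x+1)² + b(x+1) + c)^{k−1} = ∑_{(a,b,c) ∈ ℤ³, b²−4ac=D, N∣a, a<0, ax²+bx+c>0} (ax² + bx + c)^{k−1}; both sums are finite. -/

import Mathlib

/-!
The translation `Q(X) ↦ Q(X + 1)` sends `[a, b, c]` to `[a, 2a + b, a + b + c]`. It preserves the
discriminant and the leading coefficient, hence the conditions `N ∣ a` and `a < 0`, and it is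
invertible over `ℤ`. It therefore restricts to a bijection from the forms with `Q(x + 1) > 0` to
those with `Q(x) > 0` that matches the summands, and the two sums agree term by term.

The sums are genuinely finite (`finite_forms`), so the unconditional sums are not junk values:
for `x = m / n` and `t = n² Q(x)`, a positive integer, one has
`(2am + bn)² + 4|a|t = D n²`, which bounds `a`, then `b`, then `c`.
-/

/-- The action of the translation `X ↦ X + 1` on coefficient triples of quadratic forms. -/
def translateForm : ℤ × ℤ × ℤ ≃ ℤ × ℤ × ℤ where
  toFun p := (p.1, 2 * p.1 + p.2.1, p.1 + p.2.1 + p.2.2)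
  invFun p := (p.1, p.2.1 - 2 * p.1, p.1 - p.2.1 + p.2.2)
  left_inv := by
    rintro ⟨a, b, c⟩
    simp only [Prod.mk.injEq]
    refine ⟨trivial, ?_, ?_⟩ <;> ring
  right_inv := by
    rintro ⟨a, b, c⟩
    simp only [Prod.mk.injEq]
    refine ⟨trivial, ?_, ?_⟩ <;> ring

lemma translateForm_eval (p : ℤ × ℤ × ℤ) (y : ℝ) :
    ((translateForm p).1 : ℝ) * y ^ 2 + ((translateForm p).2.1 : ℝ) * y
      + ((translateForm p).2.2 : ℝ)
      = (p.1 : ℝ) * (y + 1) ^ 2 + (p.2.1 : ℝ) * (y + 1) + (p.2.2 : ℝ) := by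
  simp only [translateForm, Equiv.coe_fn_mk]
  push_cast
  ring

lemma translateForm_disc (p : ℤ × ℤ × ℤ) :
    (translateForm p).2.1 ^ 2 - 4 * (translateForm p).1 * (translateForm p).2.2
      = p.2.1 ^ 2 - 4 * p.1 * p.2.2 := by
  simp only [translateForm, Equiv.coe_fn_mk]
  ring

/-- At a rational point only finitely many forms of discriminant `D` with `a < 0` are positive.
Applied to `x` and to `x + 1`, it shows that both sums in the periodicity statement are finite. -/
theorem finite_forms (N D : ℕ) (x : ℚ) :
    {p : ℤ × ℤ × ℤ | p.2.1 ^ 2 - 4 * p.1 * p.2.2 = (D : ℤ) ∧ (N : ℤ) ∣ p.1 ∧ p.1 < 0 ∧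
      0 < (p.1 : ℝ) * (x : ℝ) ^ 2 + (p.2.1 : ℝ) * (x : ℝ) + (p.2.2 : ℝ)}.Finite := by
  obtain ⟨n, hn⟩ : ∃ n : ℤ, n = x.den := ⟨_, rfl⟩
  obtain ⟨m, hm⟩ : ∃ m : ℤ, m = x.num := ⟨_, rfl⟩
  have hn1 : 1 ≤ n := by have := x.den_pos; omega
  have hx : (x : ℝ) * n = m := by
    rw [hn, hm]
    exact_mod_cast Rat.mul_den_eq_num x
  -- successive bounds for `|a|`, `|b|` and `|c|`
  obtain ⟨A, hA⟩ : ∃ A : ℤ, A = D * n ^ 2 := ⟨_, rfl⟩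
  obtain ⟨B, hB⟩ : ∃ B : ℤ, B = A + 2 * A * |m| := ⟨_, rfl⟩
  obtain ⟨C, hC⟩ : ∃ C : ℤ, C = B ^ 2 + D := ⟨_, rfl⟩
  refine ((Set.finite_Icc (-A) A).prod
    ((Set.finite_Icc (-B) B).prod (Set.finite_Icc (-C) C))).subset ?_
  rintro ⟨a, b, c⟩ ⟨hd, -, ha, hpos⟩
  simp only at hd ha hpos
  have ht : 0 < a * m ^ 2 + b * m * n + c * n ^ 2 := by
    have hnR : (0 : ℝ) < n := by exact_mod_cast (by omega : 0 < n)
    have h : (0 : ℝ) < a * m ^ 2 + b * m * n + c * n ^ 2 := by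
      have h2 : (a : ℝ) * m ^ 2 + b * m * n + c * n ^ 2
          = ((a : ℝ) * (x : ℝ) ^ 2 + b * (x : ℝ) + c) * n ^ 2 := by
        rw [← hx]
        ring
      rw [h2]
      exact mul_pos hpos (pow_pos hnR 2)
    exact_mod_cast h
  obtain ⟨t, htd⟩ : ∃ t, t = a * m ^ 2 + b * m * n + c * n ^ 2 := ⟨_, rfl⟩
  rw [← htd] at ht
  obtain ⟨s, hs⟩ : ∃ s, s = 2 * a * m + b * n := ⟨_, rfl⟩
  have key : s ^ 2 + 4 * (-a) * t = A := by
    rw [hA, ← hd, hs, htd]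
    ring
  have hat : -a ≤ (-a) * t := le_mul_of_one_le_right (by omega) ht
  have haA : -a ≤ A := by nlinarith [sq_nonneg s]
  have hsA : |s| ≤ A := by
    have h1 : |s| ≤ s ^ 2 := sq_abs s ▸ Int.le_self_sq |s|
    nlinarith
  have hbB : |b| ≤ B := by
    have h1 : |b| ≤ |b| * n := le_mul_of_one_le_right (abs_nonneg b) hn1
    have h2 : |b| * n = |s - 2 * a * m| := by
      rw [hs, ← abs_of_pos (by omega : 0 < n), ← abs_mul, abs_of_pos (by omega : 0 < n)]
      congr 1
      ring
    have h3 : |s - 2 * a * m| ≤ |s| + |2 * a * m| := abs_sub _ _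
    have h4 : |2 * a * m| = 2 * (-a) * |m| := by
      rw [abs_mul, abs_mul, abs_of_neg ha]
      norm_num
    have h5 : (-a) * |m| ≤ A * |m| := mul_le_mul_of_nonneg_right haA (abs_nonneg m)
    linarith
  have hcC : |c| ≤ C := by
    have h1 : |c| ≤ (-a) * |c| := le_mul_of_one_le_left (abs_nonneg c) (by omega)
    have h2 : (-a) * |c| = |a * c| := by rw [abs_mul, abs_of_neg ha]
    have h3 : b ^ 2 ≤ B ^ 2 := sq_le_sq' (by linarith [abs_le.mp hbB]) (abs_le.mp hbB).2
    have h4 : |a * c| ≤ C := by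
      rw [abs_le]
      constructor <;> nlinarith [sq_nonneg b, sq_nonneg B, Int.natCast_nonneg D]
    linarith
  exact ⟨⟨by simp only; omega, by simp only; omega⟩, abs_le.mp hbB, abs_le.mp hcC⟩

/-- 1-periodicity at rational arguments of the finite sum
`𝒮(x) = ∑_{a<0, Q(x,1)>0} Q(x,1)^{k-1}` over forms of discriminant `D` with `N ∣ a`:
`𝒮(x+1) = 𝒮(x)` for every rational `x`. -/
theorem local_polynomial_periodicity_at_rationals
    (N D k : ℕ) (hN : 0 < N) (hD : 0 < D) (hDns : ¬ IsSquare D) (hk : 0 < k)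
    (x : ℚ) :
    (∑' p : {p : ℤ × ℤ × ℤ //
        p.2.1 ^ 2 - 4 * p.1 * p.2.2 = (D : ℤ) ∧ (N : ℤ) ∣ p.1 ∧ p.1 < 0 ∧
        0 < (p.1 : ℝ) * ((x : ℝ) + 1) ^ 2 + (p.2.1 : ℝ) * ((x : ℝ) + 1) + (p.2.2 : ℝ)},
      ((p.1.1 : ℝ) * ((x : ℝ) + 1) ^ 2 + (p.1.2.1 : ℝ) * ((x : ℝ) + 1) + (p.1.2.2 : ℝ)) ^ (k - 1)) =
    ∑' p : {p : ℤ × ℤ × ℤ //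
        p.2.1 ^ 2 - 4 * p.1 * p.2.2 = (D : ℤ) ∧ (N : ℤ) ∣ p.1 ∧ p.1 < 0 ∧
        0 < (p.1 : ℝ) * (x : ℝ) ^ 2 + (p.2.1 : ℝ) * (x : ℝ) + (p.2.2 : ℝ)},
      ((p.1.1 : ℝ) * (x : ℝ) ^ 2 + (p.1.2.1 : ℝ) * (x : ℝ) + (p.1.2.2 : ℝ)) ^ (k - 1) := by
  let e := translateForm.subtypeEquiv
    (p := fun p => p.2.1 ^ 2 - 4 * p.1 * p.2.2 = (D : ℤ) ∧ (N : ℤ) ∣ p.1 ∧ p.1 < 0 ∧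
        0 < (p.1 : ℝ) * ((x : ℝ) + 1) ^ 2 + (p.2.1 : ℝ) * ((x : ℝ) + 1) + (p.2.2 : ℝ))
    (q := fun p => p.2.1 ^ 2 - 4 * p.1 * p.2.2 = (D : ℤ) ∧ (N : ℤ) ∣ p.1 ∧ p.1 < 0 ∧
        0 < (p.1 : ℝ) * (x : ℝ) ^ 2 + (p.2.1 : ℝ) * (x : ℝ) + (p.2.2 : ℝ))
    (fun p => by rw [translateForm_disc, translateForm_eval]; rfl)
  rw [← e.tsum_eq]
  refine tsum_congr fun p => ?_
  rw [Equiv.subtypeEquiv_apply, translateForm_eval]
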